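/- Assume the hypotheses of the fat-hand block-identifiability theorem (two models with perfect fat-hand interventions whose targets cover [d], block-interventional discrepancy, and C¹ diffeomorphisms f, f′ matching all pushforwards), with all densities and diffeomorphisms additionally C². Suppose furthermore that for some target set τ with n := |τ| there are 2n perfect interventional regimes with target τ whose intervened block densities factorize into strictly positive C² marginals q^s_{τ,j}, such that for every z_τ ∈ ℝⁿ the vectors w(z_τ,1) − w(z_τ,0), …, w(z_τ,2n) − w(z_τ,0) are linearly independent in ℝ^{2n}, where w(z_τ, s) := ( ((q^s_{τ,1})′/q^s_{τ,1})′(z_{τ,1}), …, ((q^s_{τ,n})′/q^s_{τ,n})′(z_{τ,n}), ((q^s_{τ,1})′/q^s_{τ,1})(z_{τ,1}), …, ((q^s_{τ,n})′/q^s_{τ,n})(z_{τ,n}) ) and s = 0 denotes the unintervened block mechanism. Then the block map φ_τ : ℝⁿ → ℝⁿ (from the block-identifiability conclusion for φ := f′⁻¹∘f) belongs to S_reparam on ℝⁿ: there exist a permutation π of [n] and C¹ diffeomorphisms h_1,…,h_n of ℝ such that φ_τ(z)_j = h_j(z_{π(j)}) for all z ∈ ℝⁿ and all j ∈ [n]. 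-/

import Mathlib

open MeasureTheory

noncomputable section

/-- `f` depends only on the coordinates in `S`. -/
def DependsOnlyOn {d : ℕ} {α : Type*} (f : (Fin d → ℝ) → α) (S : Finset (Fin d)) : Prop :=
  ∀ z w : Fin d → ℝ, (∀ i ∈ S, z i = w i) → f z = f w

/-- `f` is a C¹ diffeomorphism between (real) normed spaces. -/
def IsC1Diffeo {E F : Type*} [NormedAddCommGroup E] [NormedSpace ℝ E]
    [NormedAddCommGroup F] [NormedSpace ℝ F] (f : E → F) : Prop :=
  ContDiff ℝ 1 f ∧ ∃ g : F → E, ContDiff ℝ 1 g ∧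
    Function.LeftInverse g f ∧ Function.RightInverse g f

/-- The measure on `ℝ^d` with density `ρ` with respect to Lebesgue measure. -/
def densityMeasure {d : ℕ} (ρ : (Fin d → ℝ) → ℝ) : Measure (Fin d → ℝ) :=
  volume.withDensity fun z => ENNReal.ofReal (ρ z)

/-- The measure on `ℝ` with density `r` with respect to Lebesgue measure. -/
def densityMeasure₁ (r : ℝ → ℝ) : Measure ℝ :=
  volume.withDensity fun x => ENNReal.ofReal (r x)

/-- Membership in `S_scaling`: the map acts by an elementwise C¹ diffeomorphism of `ℝ`
on each coordinate. -/
def InSScaling {d : ℕ} (h : (Fin d → ℝ) → (Fin d → ℝ)) : Prop :=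
  ∃ hs : Fin d → ℝ → ℝ, (∀ i, IsC1Diffeo (hs i)) ∧ ∀ (z : Fin d → ℝ) (i : Fin d), h z i = hs i (z i)

/-- Membership in `S_reparam`: a coordinate permutation composed with an element of
`S_scaling`. -/
def InSReparam {d : ℕ} (g : (Fin d → ℝ) → (Fin d → ℝ)) : Prop :=
  ∃ (σ : Equiv.Perm (Fin d)) (hs : Fin d → ℝ → ℝ),
    (∀ i, IsC1Diffeo (hs i)) ∧ ∀ (z : Fin d → ℝ) (i : Fin d), g z i = hs (σ i) (z (σ i))

/-- A C¹ conditional-density family for the DAG on `Fin d` with parent map `pa`: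
each `p i` is strictly positive, C¹, depends only on the coordinates `{i} ∪ pa i`,
and integrates to `1` in the `i`-th coordinate. -/
def IsCondFamily {d : ℕ} (pa : Fin d → Finset (Fin d))
    (p : Fin d → (Fin d → ℝ) → ℝ) : Prop :=
  ∀ i, (∀ z, 0 < p i z) ∧ ContDiff ℝ 1 (p i) ∧
    DependsOnlyOn (p i) (insert i (pa i)) ∧
    ∀ z, (∫ t : ℝ, p i (Function.update z i t)) = 1

/-- A strictly positive C¹ probability density on `ℝ`. -/
def IsC1Density (r : ℝ → ℝ) : Prop :=
  (∀ x, 0 < r x) ∧ ContDiff ℝ 1 r ∧ (∫ x : ℝ, r x) = 1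

/-- The joint density `z ↦ ∏ i, p i z` of a conditional-density family. -/
def jointDensity {d : ℕ} (p : Fin d → (Fin d → ℝ) → ℝ) : (Fin d → ℝ) → ℝ :=
  fun z => ∏ i, p i z

/-- `j` is an ancestor of `i` in the DAG with parent map `pa` (transitive closure of the
parent relation). -/
def IsAnc {d : ℕ} (pa : Fin d → Finset (Fin d)) (j i : Fin d) : Prop :=
  Relation.TransGen (fun a b => a ∈ pa b) j i

/-- The observational joint mechanism of the block `τ`: the product of the causal mechanisms
of the nodes in `τ`. -/
def blockMech {d : ℕ} (p : Fin d → (Fin d → ℝ) → ℝ) (τ : Finset (Fin d)) :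
    (Fin d → ℝ) → ℝ := fun z => ∏ i ∈ τ, p i z

/-- The `j`-th element of the block `τ` (under the canonical enumeration of `τ`). -/
def coordOf {d : ℕ} (τ : Finset (Fin d)) (j : Fin τ.card) : Fin d :=
  ((τ.equivFin.symm j : τ) : Fin d)

/-- A strictly positive C¹ joint intervened density over the block `τ` (no conditioning on
other variables): it depends only on the coordinates in `τ` and integrates to 1 over the
block. -/
def IsBlockDensity {d : ℕ} (τ : Finset (Fin d)) (r : (Fin d → ℝ) → ℝ) : Prop :=
  (∀ z, 0 < r z) ∧ ContDiff ℝ 1 r ∧ DependsOnlyOn r τ ∧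
    ∀ z : Fin d → ℝ,
      (∫ y : {x // x ∈ τ} → ℝ, r (fun j => if h : j ∈ τ then y ⟨j, h⟩ else z j)) = 1

/-- Embed a configuration of the block `τ` into `ℝ^d`, filling the other coordinates
with `0`. -/
def fillBlock {d : ℕ} (τ : Finset (Fin d)) (y : {x // x ∈ τ} → ℝ) : Fin d → ℝ :=
  fun j => if h : j ∈ τ then y ⟨j, h⟩ else 0

/-- The map `ℝ^τ → ℝ^τ` induced by the components of `φ` indexed by `τ` (well defined when
those components depend only on the coordinates in `τ`). -/
def blockMap {d : ℕ} (φ : (Fin d → ℝ) → (Fin d → ℝ)) (τ : Finset (Fin d)) :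
    ({x // x ∈ τ} → ℝ) → ({x // x ∈ τ} → ℝ) :=
  fun y i => φ (fillBlock τ y) (i : Fin d)

/-- `f` is a C² diffeomorphism between (real) normed spaces. -/
def IsC2Diffeo {E F : Type*} [NormedAddCommGroup E] [NormedSpace ℝ E]
    [NormedAddCommGroup F] [NormedSpace ℝ F] (f : E → F) : Prop :=
  ContDiff ℝ 2 f ∧ ∃ g : F → E, ContDiff ℝ 2 g ∧
    Function.LeftInverse g f ∧ Function.RightInverse g f

/-- A C² conditional-density family for the DAG with parent map `pa`. -/
def IsCondFamily2 {d : ℕ} (pa : Fin d → Finset (Fin d))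
    (p : Fin d → (Fin d → ℝ) → ℝ) : Prop :=
  ∀ i, (∀ z, 0 < p i z) ∧ ContDiff ℝ 2 (p i) ∧
    DependsOnlyOn (p i) (insert i (pa i)) ∧
    ∀ z, (∫ t : ℝ, p i (Function.update z i t)) = 1

/-- A strictly positive C² joint intervened density over the block `τ`. -/
def IsBlockDensity2 {d : ℕ} (τ : Finset (Fin d)) (r : (Fin d → ℝ) → ℝ) : Prop :=
  (∀ z, 0 < r z) ∧ ContDiff ℝ 2 r ∧ DependsOnlyOn r τ ∧
    ∀ z : Fin d → ℝ,
      (∫ y : {x // x ∈ τ} → ℝ, r (fun j => if h : j ∈ τ then y ⟨j, h⟩ else z j)) = 1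

/-- A strictly positive C² probability density on `ℝ`. -/
def IsC2Density (r : ℝ → ℝ) : Prop :=
  (∀ x, 0 < r x) ∧ ContDiff ℝ 2 r ∧ (∫ x : ℝ, r x) = 1

/-- The vector `w(z_τ, s)` of Proposition 7: second and first log-derivative statistics
`((ρ j)′/ρ j)′` and `(ρ j)′/ρ j` of the marginals `ρ j`, evaluated at the block
configuration `y`. -/
def wVec {d : ℕ} (τ : Finset (Fin d)) (ρ : Fin τ.card → ℝ → ℝ)
    (y : {x // x ∈ τ} → ℝ) : Fin τ.card ⊕ Fin τ.card → ℝ :=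
  Sum.elim
    (fun j => deriv (fun t => deriv (ρ j) t / ρ j t) (y (τ.equivFin.symm j)))
    (fun j => deriv (ρ j) (y (τ.equivFin.symm j)) / ρ j (y (τ.equivFin.symm j)))

/-!
Both regimes of a pair are transported by `φ = f'⁻¹ ∘ f`, so the Jacobian and the factors outside
the block cancel from the density ratio. Taking logarithms, regime `s` against the unintervened one
yields a separable identity `∑ j, α s j (z j) = ∑ j, β s j (φ z j)` over the block. Off-diagonal
second derivatives kill the left side, so each vector `((β s j)''), ((β s j)')` is orthogonal to
`(∂ᵢφⱼ ∂ₖφⱼ), (∂ᵢ∂ₖφⱼ)` for `i ≠ k`; these `2n` vectors span, hence `∂ᵢφⱼ ∂ₖφⱼ = 0`. Every row of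
the Jacobian in the block therefore has exactly one nonzero entry, whose position does not move
because the domain is connected, and `φⱼ` is an injective function of that one coordinate. The
first-order identity shows that the coordinate lies in the block.
-/

section ChangeOfVariables

lemma map_withDensity_comp {X Y : Type*} [MeasurableSpace X] [MeasurableSpace Y]
    (μ : Measure X) {φ : X → Y} (hφ : Measurable φ) {g : Y → ENNReal} (hg : Measurable g) :
    Measure.map φ (μ.withDensity (g ∘ φ)) = (Measure.map φ μ).withDensity g := by
  ext A hA
  rw [Measure.map_apply hφ hA, withDensity_apply _ (hφ hA), withDensity_apply _ hA,
    setLIntegral_map hA hg hφ]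
  rfl

lemma withDensity_ofReal_mul {X : Type*} [MeasurableSpace X] (μ : Measure X) {ρ R : X → ℝ}
    (hρ : Measurable ρ) (hR : Measurable R) (hρ_nonneg : ∀ x, 0 ≤ ρ x) :
    (μ.withDensity fun x => ENNReal.ofReal (ρ x * R x)) =
      (μ.withDensity fun x => ENNReal.ofReal (ρ x)).withDensity
        fun x => ENNReal.ofReal (R x) := by
  rw [← withDensity_mul _ hρ.ennreal_ofReal hR.ennreal_ofReal]
  exact congrArg _ (funext fun x => ENNReal.ofReal_mul (hρ_nonneg x))

lemma eq_of_withDensity_ofReal_eq {X : Type*} [TopologicalSpace X] [MeasurableSpace X]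
    [BorelSpace X] {μ : Measure X} [SigmaFinite μ] [μ.IsOpenPosMeasure] {σ σ' : X → ℝ}
    (hσ : Continuous σ) (hσ' : Continuous σ')
    (hσ_nonneg : ∀ x, 0 ≤ σ x) (hσ'_nonneg : ∀ x, 0 ≤ σ' x)
    (h : (μ.withDensity fun x => ENNReal.ofReal (σ x)) =
      μ.withDensity fun x => ENNReal.ofReal (σ' x)) :
    σ = σ' := by
  rw [withDensity_eq_iff_of_sigmaFinite hσ.measurable.ennreal_ofReal.aemeasurable
    hσ'.measurable.ennreal_ofReal.aemeasurable] at h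
  have h_ofReal := (Continuous.ae_eq_iff_eq μ (ENNReal.continuous_ofReal.comp hσ)
    (ENNReal.continuous_ofReal.comp hσ')).1 h
  exact funext fun x =>
    (ENNReal.ofReal_eq_ofReal_iff (hσ_nonneg x) (hσ'_nonneg x)).1 (congrFun h_ofReal x)

-- The Jacobian of `φ` is the same in both pushforwards, so it cancels in the ratio.
lemma div_eq_div_comp_of_map_withDensity_eq {X Y : Type*}
    [TopologicalSpace X] [MeasurableSpace X] [BorelSpace X]
    [TopologicalSpace Y] [MeasurableSpace Y] [BorelSpace Y]
    {μ : Measure X} {ν : Measure Y} [SigmaFinite ν] [ν.IsOpenPosMeasure]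
    {φ : X → Y} (hφ : IsHomeomorph φ) {ρ₀ ρ₁ : X → ℝ} {σ₀ σ₁ : Y → ℝ}
    (hρ₀ : Continuous ρ₀) (hρ₁ : Continuous ρ₁) (hσ₀ : Continuous σ₀) (hσ₁ : Continuous σ₁)
    (hρ₀_pos : ∀ x, 0 < ρ₀ x) (hρ₁_nonneg : ∀ x, 0 ≤ ρ₁ x)
    (hσ₀_pos : ∀ y, 0 < σ₀ y) (hσ₁_nonneg : ∀ y, 0 ≤ σ₁ y)
    (h₀ : Measure.map φ (μ.withDensity fun x => ENNReal.ofReal (ρ₀ x)) =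
      ν.withDensity fun y => ENNReal.ofReal (σ₀ y))
    (h₁ : Measure.map φ (μ.withDensity fun x => ENNReal.ofReal (ρ₁ x)) =
      ν.withDensity fun y => ENNReal.ofReal (σ₁ y)) (x : X) :
    ρ₁ x / ρ₀ x = σ₁ (φ x) / σ₀ (φ x) := by
  obtain ⟨hφ_cont, ψ, hψφ, -, hψ_cont⟩ := isHomeomorph_iff_exists_inverse.1 hφ
  set R : Y → ℝ := fun y => ρ₁ (ψ y) / ρ₀ (ψ y)
  have hR : Continuous R :=
    (hρ₁.comp hψ_cont).div (hρ₀.comp hψ_cont) fun y => (hρ₀_pos _).ne'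
  have hρ₁_eq : ρ₁ = fun x => ρ₀ x * R (φ x) := by
    funext x
    simp only [R, hψφ x, mul_div_cancel₀ _ (hρ₀_pos x).ne']
  have hρ₁_measure : (μ.withDensity fun x => ENNReal.ofReal (ρ₁ x)) =
      (μ.withDensity fun x => ENNReal.ofReal (ρ₀ x)).withDensity
        ((fun y => ENNReal.ofReal (R y)) ∘ φ) := by
    rw [hρ₁_eq]
    exact withDensity_ofReal_mul μ hρ₀.measurable (hR.comp hφ_cont).measurable
      fun x => (hρ₀_pos x).le
  have hσ₁_eq : σ₁ = fun y => σ₀ y * R y := by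
    refine eq_of_withDensity_ofReal_eq (μ := ν) hσ₁ (hσ₀.mul hR) hσ₁_nonneg
      (fun y => mul_nonneg (hσ₀_pos y).le (div_nonneg (hρ₁_nonneg _) (hρ₀_pos _).le)) ?_
    rw [withDensity_ofReal_mul ν hσ₀.measurable hR.measurable fun y => (hσ₀_pos y).le,
      ← h₀, ← h₁, hρ₁_measure,
      map_withDensity_comp _ hφ_cont.measurable hR.measurable.ennreal_ofReal]
  rw [hσ₁_eq, mul_div_cancel_left₀ _ (hσ₀_pos _).ne']
  simp only [R, hψφ x]

lemma map_comp_eq_of_map_eq_map {X Y Z : Type*} [MeasurableSpace X] [MeasurableSpace Y]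
    [MeasurableSpace Z] {μ : Measure X} {ν : Measure Z} {f : X → Y} {f' : Z → Y} {g' : Y → Z}
    (hf : Measurable f) (hf' : Measurable f') (hg' : Measurable g')
    (hg'f' : Function.LeftInverse g' f') (h : Measure.map f μ = Measure.map f' ν) :
    Measure.map (g' ∘ f) μ = ν := by
  rw [← Measure.map_map hg' hf, h, Measure.map_map hg' hf', hg'f'.comp_eq_id, Measure.map_id]

end ChangeOfVariables

section LogRatio

lemma log_prod_mul_div_prod_mul {κ : Type*} [Fintype κ] {a b : κ → ℝ} {c : ℝ}
    (ha : ∀ j, a j ≠ 0) (hb : ∀ j, b j ≠ 0) (hc : c ≠ 0) :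
    Real.log (((∏ j, a j) * c) / ((∏ j, b j) * c)) =
      ∑ j, (Real.log (a j) - Real.log (b j)) := by
  rw [mul_div_mul_right _ _ hc, ← Finset.prod_div_distrib,
    Real.log_prod fun j _ => div_ne_zero (ha j) (hb j)]
  exact Finset.sum_congr rfl fun j _ => Real.log_div (ha j) (hb j)

-- The factors `P` and `Q` outside the block are shared by the two regimes and cancel.
lemma sum_log_sub_log_eq_of_map_eq {d : ℕ} {κ : Type*} [Fintype κ] (c : κ → Fin d)
    {φ : (Fin d → ℝ) → (Fin d → ℝ)} (hφ : IsHomeomorph φ) {P Q : (Fin d → ℝ) → ℝ}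
    (hP : Continuous P) (hQ : Continuous Q) (hP_pos : ∀ z, 0 < P z) (hQ_pos : ∀ z, 0 < Q z)
    {u₀ u₁ v₀ v₁ : κ → ℝ → ℝ}
    (hu₀ : ∀ j, Continuous (u₀ j)) (hu₁ : ∀ j, Continuous (u₁ j))
    (hv₀ : ∀ j, Continuous (v₀ j)) (hv₁ : ∀ j, Continuous (v₁ j))
    (hu₀_pos : ∀ j t, 0 < u₀ j t) (hu₁_pos : ∀ j t, 0 < u₁ j t)
    (hv₀_pos : ∀ j t, 0 < v₀ j t) (hv₁_pos : ∀ j t, 0 < v₁ j t)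
    (h₀ : Measure.map φ (densityMeasure fun z => (∏ j, u₀ j (z (c j))) * P z) =
      densityMeasure fun z => (∏ j, v₀ j (z (c j))) * Q z)
    (h₁ : Measure.map φ (densityMeasure fun z => (∏ j, u₁ j (z (c j))) * P z) =
      densityMeasure fun z => (∏ j, v₁ j (z (c j))) * Q z) (z : Fin d → ℝ) :
    ∑ j, (Real.log (u₁ j (z (c j))) - Real.log (u₀ j (z (c j)))) =
      ∑ j, (Real.log (v₁ j (φ z (c j))) - Real.log (v₀ j (φ z (c j)))) := by
  have hcont : ∀ {w : κ → ℝ → ℝ} {B : (Fin d → ℝ) → ℝ}, (∀ j, Continuous (w j)) →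
      Continuous B → Continuous fun z : Fin d → ℝ => (∏ j, w j (z (c j))) * B z :=
    fun hw hB => (continuous_finsetProd _ fun j _ => (hw j).comp (continuous_apply _)).mul hB
  have hpos : ∀ {w : κ → ℝ → ℝ} {B : (Fin d → ℝ) → ℝ}, (∀ j t, 0 < w j t) →
      (∀ z, 0 < B z) → ∀ z : Fin d → ℝ, 0 < (∏ j, w j (z (c j))) * B z :=
    fun hw hB z => mul_pos (Finset.prod_pos fun j _ => hw j _) (hB z)
  have hratio := div_eq_div_comp_of_map_withDensity_eq hφ
    (hcont hu₀ hP) (hcont hu₁ hP) (hcont hv₀ hQ) (hcont hv₁ hQ)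
    (hpos hu₀_pos hP_pos) (fun z => (hpos hu₁_pos hP_pos z).le)
    (hpos hv₀_pos hQ_pos) (fun z => (hpos hv₁_pos hQ_pos z).le) h₀ h₁ z
  have hlog := congrArg Real.log hratio
  rwa [log_prod_mul_div_prod_mul (fun j => (hu₁_pos j _).ne') (fun j => (hu₀_pos j _).ne')
      (hP_pos z).ne',
    log_prod_mul_div_prod_mul (fun j => (hv₁_pos j _).ne') (fun j => (hv₀_pos j _).ne')
      (hQ_pos _).ne'] at hlog

end LogRatio

lemma IsC2Density.contDiff_log {r : ℝ → ℝ} (hr : IsC2Density r) :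
    ContDiff ℝ 2 fun t => Real.log (r t) :=
  hr.2.1.log fun t => (hr.1 t).ne'

section CurvatureSlope

variable {κ : Type*}

/-- The second and first derivatives at `y` of a separable function `∑ j, β j (y j)`. For the
log-marginals `β j = log (ρ j)` of a block this is the vector `wVec`. -/
def curvatureSlope (β : κ → ℝ → ℝ) (y : κ → ℝ) : κ ⊕ κ → ℝ :=
  Sum.elim (fun j => deriv (deriv (β j)) (y j)) (fun j => deriv (β j) (y j))

lemma curvatureSlope_sub {β γ : κ → ℝ → ℝ} (hβ : ∀ j, ContDiff ℝ 2 (β j))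
    (hγ : ∀ j, ContDiff ℝ 2 (γ j)) (y : κ → ℝ) :
    curvatureSlope (fun j t => β j t - γ j t) y = curvatureSlope β y - curvatureSlope γ y := by
  have hderiv : ∀ j, deriv (fun t => β j t - γ j t) = fun t => deriv (β j) t - deriv (γ j) t :=
    fun j => funext fun t => deriv_fun_sub ((hβ j).differentiable two_ne_zero t)
      ((hγ j).differentiable two_ne_zero t)
  ext (j | j)
  · simp only [curvatureSlope, hderiv, Sum.elim_inl, Pi.sub_apply]
    exact deriv_fun_sub ((hβ j).differentiable_deriv_two _) ((hγ j).differentiable_deriv_two _)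
  · simp only [curvatureSlope, hderiv, Sum.elim_inr, Pi.sub_apply]

lemma wVec_eq_curvatureSlope_log {d : ℕ} (τ : Finset (Fin d)) {ρ : Fin τ.card → ℝ → ℝ}
    (hρ : ∀ j, Differentiable ℝ (ρ j)) (hρ_ne : ∀ j t, ρ j t ≠ 0) (y : {x // x ∈ τ} → ℝ) :
    wVec τ ρ y =
      curvatureSlope (fun j t => Real.log (ρ j t)) (fun j => y (τ.equivFin.symm j)) := by
  have hderiv : ∀ j, deriv (fun t => Real.log (ρ j t)) = fun t => deriv (ρ j) t / ρ j t :=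
    fun j => funext fun t => deriv.log (hρ j t) (hρ_ne j t)
  simp only [wVec, curvatureSlope, hderiv]

lemma curvatureSlope_log_sub_log {d : ℕ} (τ : Finset (Fin d)) {ρ ρ₀ : Fin τ.card → ℝ → ℝ}
    (hρ : ∀ j, IsC2Density (ρ j)) (hρ₀ : ∀ j, IsC2Density (ρ₀ j)) (y : {x // x ∈ τ} → ℝ) :
    curvatureSlope (fun j t => Real.log (ρ j t) - Real.log (ρ₀ j t))
        (fun j => y (τ.equivFin.symm j)) =
      wVec τ ρ y - wVec τ ρ₀ y := by
  rw [curvatureSlope_sub (fun j => (hρ j).contDiff_log) (fun j => (hρ₀ j).contDiff_log),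
    wVec_eq_curvatureSlope_log τ (fun j => (hρ j).2.1.differentiable two_ne_zero)
      fun j t => ((hρ j).1 t).ne',
    wVec_eq_curvatureSlope_log τ (fun j => (hρ₀ j).2.1.differentiable two_ne_zero)
      fun j t => ((hρ₀ j).1 t).ne']

end CurvatureSlope

section SeparableComposition

variable {κ E : Type*} [Fintype κ] [NormedAddCommGroup E] [NormedSpace ℝ E]

lemma fderiv_sum_comp {β : κ → ℝ → ℝ} {Φ : κ → E → ℝ} (hβ : ∀ j, Differentiable ℝ (β j))
    (hΦ : ∀ j, Differentiable ℝ (Φ j)) (x v : E) :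
    fderiv ℝ (fun x => ∑ j, β j (Φ j x)) x v =
      ∑ j, deriv (β j) (Φ j x) * fderiv ℝ (Φ j) x v := by
  have h : HasFDerivAt (fun x => ∑ j, β j (Φ j x))
      (∑ j, deriv (β j) (Φ j x) • fderiv ℝ (Φ j) x) x :=
    HasFDerivAt.fun_sum fun j _ =>
      (hβ j (Φ j x)).hasDerivAt.comp_hasFDerivAt x (hΦ j x).hasFDerivAt
  simp [h.fderiv]

lemma fderiv_fderiv_sum_comp {β : κ → ℝ → ℝ} {Φ : κ → E → ℝ}
    (hβ : ∀ j, ContDiff ℝ 2 (β j)) (hΦ : ∀ j, ContDiff ℝ 2 (Φ j)) (x v w : E) :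
    fderiv ℝ (fun x => fderiv ℝ (fun x => ∑ j, β j (Φ j x)) x v) x w =
      ∑ j, deriv (deriv (β j)) (Φ j x) * (fderiv ℝ (Φ j) x w * fderiv ℝ (Φ j) x v) +
        ∑ j, deriv (β j) (Φ j x) * fderiv ℝ (fun x => fderiv ℝ (Φ j) x v) x w := by
  have hΦ_diff : ∀ j, Differentiable ℝ (Φ j) := fun j => (hΦ j).differentiable two_ne_zero
  have hΦ_dir : ∀ j, Differentiable ℝ fun x => fderiv ℝ (Φ j) x v := fun j =>
    (((hΦ j).fderiv_right (m := 1) le_rfl).clm_apply contDiff_const).differentiable one_ne_zero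
  have h : HasFDerivAt (fun x => ∑ j, deriv (β j) (Φ j x) * fderiv ℝ (Φ j) x v)
      (∑ j, (deriv (β j) (Φ j x) • fderiv ℝ (fun x => fderiv ℝ (Φ j) x v) x +
        fderiv ℝ (Φ j) x v • deriv (deriv (β j)) (Φ j x) • fderiv ℝ (Φ j) x)) x :=
    HasFDerivAt.fun_sum fun j _ =>
      (((hβ j).differentiable_deriv_two (Φ j x)).hasDerivAt.comp_hasFDerivAt x
        (hΦ_diff j x).hasFDerivAt).mul (hΦ_dir j x).hasFDerivAt
  simp only [fderiv_sum_comp (fun j => (hβ j).differentiable two_ne_zero) hΦ_diff, h.fderiv,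
    ← Finset.sum_add_distrib, sum_apply, add_apply, smul_apply, smul_eq_mul]
  exact Finset.sum_congr rfl fun j _ => by ring

variable {ι : Type*} [Finite ι]

lemma fderiv_sum_comp_eval (c : κ → ι) {α : κ → ℝ → ℝ} (hα : ∀ j, Differentiable ℝ (α j))
    (z v : ι → ℝ) :
    fderiv ℝ (fun z : ι → ℝ => ∑ j, α j (z (c j))) z v =
      ∑ j, deriv (α j) (z (c j)) * v (c j) := by
  have := Fintype.ofFinite ι
  rw [fderiv_sum_comp hα fun j => differentiable_apply (c j)]
  simp only [(hasFDerivAt_apply _ _).fderiv, ContinuousLinearMap.proj_apply]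

lemma fderiv_fderiv_sum_comp_eval (c : κ → ι) {α : κ → ℝ → ℝ} (hα : ∀ j, ContDiff ℝ 2 (α j))
    (z v w : ι → ℝ) :
    fderiv ℝ (fun z => fderiv ℝ (fun z : ι → ℝ => ∑ j, α j (z (c j))) z v) z w =
      ∑ j, deriv (deriv (α j)) (z (c j)) * (w (c j) * v (c j)) := by
  have := Fintype.ofFinite ι
  rw [fderiv_fderiv_sum_comp hα fun j => contDiff_apply ℝ ℝ (c j)]
  simp only [(hasFDerivAt_apply _ _).fderiv, ContinuousLinearMap.proj_apply, fderiv_const_apply,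
    zero_apply, mul_zero, Finset.sum_const_zero, add_zero]

end SeparableComposition

section BlockVariability

lemma eq_zero_of_span_range_eq_top {R S ι : Type*} [CommSemiring R] [Fintype ι] {v : S → ι → R}
    (hv : Submodule.span R (Set.range v) = ⊤) {a : ι → R} (h : ∀ s, v s ⬝ᵥ a = 0) : a = 0 := by
  have h_all : (dotProductBilin R R).flip a = 0 := LinearMap.ext_on_range hv h
  exact dotProduct_eq_zero a fun w => by
    rw [dotProduct_comm]; exact LinearMap.congr_fun h_all w

variable {S κ : Type*} [Fintype κ] {β : S → κ → ℝ → ℝ}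

lemma eq_zero_of_span_curvatureSlope {y : κ → ℝ}
    (hspan : Submodule.span ℝ (Set.range fun s => curvatureSlope (β s) y) = ⊤) {a b : κ → ℝ}
    (h : ∀ s, ∑ j, deriv (deriv (β s j)) (y j) * a j + ∑ j, deriv (β s j) (y j) * b j = 0) :
    a = 0 ∧ b = 0 := by
  have hab : Sum.elim a b = 0 := eq_zero_of_span_range_eq_top hspan fun s => by
    simpa [dotProduct, Fintype.sum_sum_type, curvatureSlope] using h s
  exact ⟨funext fun j => congrFun hab (Sum.inl j), funext fun j => congrFun hab (Sum.inr j)⟩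

variable {ι : Type*} [DecidableEq ι] {c : κ → ι} {Φ : κ → (ι → ℝ) → ℝ}
  {α : S → κ → ℝ → ℝ}

lemma fderiv_single_eq_zero_of_notMem_range [Finite ι]
    (hα : ∀ s j, Differentiable ℝ (α s j)) (hβ : ∀ s j, Differentiable ℝ (β s j))
    (hΦ : ∀ j, Differentiable ℝ (Φ j))
    (hid : ∀ s z, ∑ j, α s j (z (c j)) = ∑ j, β s j (Φ j z))
    (hspan : ∀ y, Submodule.span ℝ (Set.range fun s => curvatureSlope (β s) y) = ⊤)
    {k : ι} (hk : k ∉ Set.range c) (z : ι → ℝ) (j : κ) :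
    fderiv ℝ (Φ j) z (Pi.single k 1) = 0 := by
  have := Fintype.ofFinite ι
  have hc : ∀ j, c j ≠ k := fun j hj => hk ⟨j, hj⟩
  refine congrFun (eq_zero_of_span_curvatureSlope (hspan fun j => Φ j z) (a := 0)
    (b := fun j => fderiv ℝ (Φ j) z (Pi.single k 1)) fun s => ?_).2 j
  rw [← fderiv_sum_comp (hβ s) hΦ, ← funext (hid s), fderiv_sum_comp_eval c (hα s)]
  simp [hc]

-- The mixed second derivatives of the separable left side of `hid` vanish.
lemma fderiv_single_mul_fderiv_single_eq_zero [Fintype ι]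
    (hα : ∀ s j, ContDiff ℝ 2 (α s j)) (hβ : ∀ s j, ContDiff ℝ 2 (β s j))
    (hΦ : ∀ j, ContDiff ℝ 2 (Φ j))
    (hid : ∀ s z, ∑ j, α s j (z (c j)) = ∑ j, β s j (Φ j z))
    (hspan : ∀ y, Submodule.span ℝ (Set.range fun s => curvatureSlope (β s) y) = ⊤)
    {i k : ι} (hik : i ≠ k) (z : ι → ℝ) (j : κ) :
    fderiv ℝ (Φ j) z (Pi.single i 1) * fderiv ℝ (Φ j) z (Pi.single k 1) = 0 := by
  have hsingle : ∀ l : ι, (Pi.single i 1 : ι → ℝ) l * (Pi.single k 1 : ι → ℝ) l = 0 := by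
    intro l
    rcases eq_or_ne l i with rfl | hl
    · simp [hik]
    · simp [hl]
  refine congrFun (eq_zero_of_span_curvatureSlope (hspan fun j => Φ j z)
    (a := fun j => fderiv ℝ (Φ j) z (Pi.single i 1) * fderiv ℝ (Φ j) z (Pi.single k 1))
    (b := fun j => fderiv ℝ (fun z => fderiv ℝ (Φ j) z (Pi.single k 1)) z (Pi.single i 1))
    fun s => ?_).1 j
  rw [← fderiv_fderiv_sum_comp (hβ s) hΦ, ← funext (hid s),
    fderiv_fderiv_sum_comp_eval c (hα s)]
  simp [hsingle]

end BlockVariability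

section MonomialJacobian

-- The open sets `{x | D i x ≠ 0}` are disjoint and cover a connected space.
lemma exists_forall_ne_zero_of_mul_eq_zero {X ι R : Type*} [TopologicalSpace X]
    [ConnectedSpace X] [MulZeroClass R] [NoZeroDivisors R] [TopologicalSpace R] [T1Space R]
    {D : ι → X → R} (hD : ∀ i, Continuous (D i)) (hmul : ∀ i k, i ≠ k → ∀ x, D i x * D k x = 0)
    (hex : ∀ x, ∃ i, D i x ≠ 0) : ∃ i, ∀ x, D i x ≠ 0 := by
  let U : ι → Set X := fun i => {x | D i x ≠ 0}
  have hU : ∀ i, IsOpen (U i) := fun i => isOpen_compl_singleton.preimage (hD i)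
  have hcompl : ∀ i, (U i)ᶜ = ⋃ k ∈ {k | k ≠ i}, U k := by
    refine fun i => Set.Subset.antisymm (fun x hx => ?_) (fun x hx => ?_)
    · obtain ⟨k, hk⟩ := hex x
      exact Set.mem_biUnion (x := k) (fun hki => hx (hki ▸ hk)) hk
    · obtain ⟨k, hki, hk⟩ := Set.mem_iUnion₂.1 hx
      exact not_not.2 ((mul_eq_zero.1 (hmul k i hki x)).resolve_left hk)
  have hclopen : ∀ i, IsClopen (U i) := fun i =>
    ⟨⟨hcompl i ▸ isOpen_biUnion fun k _ => hU k⟩, hU i⟩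
  obtain ⟨x₀⟩ := ConnectedSpace.toNonempty (α := X)
  obtain ⟨i, hi⟩ := hex x₀
  exact ⟨i, Set.eq_univ_iff_forall.1 ((hclopen i).eq_univ ⟨x₀, hi⟩)⟩

lemma injective_of_deriv_ne_zero {h : ℝ → ℝ} (hne : ∀ t, deriv h t ≠ 0) :
    Function.Injective h :=
  .of_lt_imp_ne fun _ _ hlt heq =>
    let ⟨t, _, ht⟩ := exists_deriv_eq_zero hlt
      (fun t _ => (differentiableAt_of_deriv_ne_zero (hne t)).continuousAt.continuousWithinAt) heq
    hne t ht

variable {ι : Type*} [DecidableEq ι]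

lemma dependsOn_of_fderiv_single_eq_zero [Finite ι] {Ψ : (ι → ℝ) → ℝ}
    (hΨ : Differentiable ℝ Ψ) {s : Set ι}
    (hzero : ∀ i ∉ s, ∀ z, fderiv ℝ Ψ z (Pi.single i 1) = 0) : DependsOn Ψ s := by
  have := Fintype.ofFinite ι
  intro z w hzw
  have hline : ∀ t : ℝ, HasDerivAt (fun t : ℝ => Ψ (z + t • (w - z)))
      (fderiv ℝ Ψ (z + t • (w - z)) (w - z)) t := fun t =>
    (hΨ _).hasFDerivAt.comp_hasDerivAt t
      (by simpa using ((hasDerivAt_id t).smul_const (w - z)).const_add z)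
  have hdir : ∀ x, fderiv ℝ Ψ x (w - z) = 0 := by
    intro x
    rw [pi_eq_sum_univ' (w - z), map_sum]
    refine Finset.sum_eq_zero fun i _ => ?_
    by_cases hi : i ∈ s
    · simp [hzw i hi]
    · simp [hzero i hi x]
  simpa using is_const_of_deriv_eq_zero (fun t => (hline t).differentiableAt)
    (fun t => (hline t).deriv.trans (hdir _)) 0 1

lemma exists_eq_comp_eval_of_fderiv_mul_eq_zero [Fintype ι] {Ψ : (ι → ℝ) → ℝ}
    (hΨ : ContDiff ℝ 1 Ψ)
    (hne : ∀ z, fderiv ℝ Ψ z ≠ 0)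
    (hmul : ∀ i k, i ≠ k → ∀ z,
      fderiv ℝ Ψ z (Pi.single i 1) * fderiv ℝ Ψ z (Pi.single k 1) = 0) :
    ∃ (k : ι) (h : ℝ → ℝ), (∀ z, fderiv ℝ Ψ z (Pi.single k 1) ≠ 0) ∧
      ContDiff ℝ 1 h ∧ Function.Injective h ∧ ∀ z, Ψ z = h (z k) := by
  have hex : ∀ z, ∃ k, fderiv ℝ Ψ z (Pi.single k 1) ≠ 0 := by
    intro z
    by_contra! hzero
    exact hne z (ContinuousLinearMap.coe_injective
      (LinearMap.pi_ext' fun i => LinearMap.ext_ring (hzero i)))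
  obtain ⟨k, hk⟩ := exists_forall_ne_zero_of_mul_eq_zero
    (D := fun k z => fderiv ℝ Ψ z (Pi.single k 1))
    (fun k => (hΨ.continuous_fderiv one_ne_zero).clm_apply continuous_const) hmul hex
  have hdep : DependsOn Ψ {k} :=
    dependsOn_of_fderiv_single_eq_zero (hΨ.differentiable one_ne_zero) fun i hi z =>
      (mul_eq_zero.1 (hmul i k hi z)).resolve_right (hk z)
  have hderiv : ∀ t, HasDerivAt (fun t : ℝ => Ψ (Pi.single k t))
      (fderiv ℝ Ψ (Pi.single k t) (Pi.single k 1)) t := fun t =>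
    (hΨ.differentiable one_ne_zero _).hasFDerivAt.comp_hasDerivAt t (hasDerivAt_single k t)
  refine ⟨k, fun t => Ψ (Pi.single k t), hk, hΨ.comp (contDiff_single _ 1 k),
    injective_of_deriv_ne_zero fun t => (hderiv t).deriv ▸ hk _, fun z => hdep ?_⟩
  simp

end MonomialJacobian

namespace IsC2Diffeo

lemma comp {E F G : Type*} [NormedAddCommGroup E] [NormedSpace ℝ E]
    [NormedAddCommGroup F] [NormedSpace ℝ F] [NormedAddCommGroup G] [NormedSpace ℝ G]
    {g : F → G} {f : E → F} (hg : IsC2Diffeo g) (hf : IsC2Diffeo f) : IsC2Diffeo (g ∘ f) := by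
  obtain ⟨hg, g', hg', hg_left, hg_right⟩ := hg
  obtain ⟨hf, f', hf', hf_left, hf_right⟩ := hf
  exact ⟨hg.comp hf, f' ∘ g', hf'.comp hg', hg_left.comp hf_left, hg_right.comp hf_right⟩

lemma isHomeomorph {E F : Type*} [NormedAddCommGroup E] [NormedSpace ℝ E]
    [NormedAddCommGroup F] [NormedSpace ℝ F] {f : E → F} (hf : IsC2Diffeo f) :
    IsHomeomorph f :=
  let ⟨hf, g, hg, hgf, hfg⟩ := hf
  isHomeomorph_iff_exists_inverse.2 ⟨hf.continuous, g, hgf, hfg, hg.continuous⟩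

variable {ι E : Type*} [Fintype ι] [NormedAddCommGroup E] [NormedSpace ℝ E]

lemma fderiv_apply_ne_zero {φ : E → ι → ℝ} (hφ : IsC2Diffeo φ) (z : E) (i : ι) :
    fderiv ℝ (fun z => φ z i) z ≠ 0 := by
  classical
  obtain ⟨hφ, ψ, hψ, hψφ, hφψ⟩ := hφ
  intro hzero
  have hφ_deriv : HasFDerivAt (fun z => φ z i) (0 : E →L[ℝ] ℝ) (ψ (φ z)) := by
    rw [hψφ z, ← hzero]
    exact (contDiff_pi.1 hφ i |>.differentiable two_ne_zero z).hasFDerivAt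
  have hcomp := hφ_deriv.comp (φ z) (hψ.differentiable two_ne_zero (φ z)).hasFDerivAt
  have heval : (fun z => φ z i) ∘ ψ = fun y => y i := funext fun y => congrFun (hφψ y) i
  rw [heval] at hcomp
  have hproj := DFunLike.congr_fun (hcomp.unique (hasFDerivAt_apply i (φ z))) (Pi.single i 1)
  simp at hproj

lemma isC1Diffeo_of_apply_eq {κ : Type*} [Fintype κ] {φ : (ι → ℝ) → (κ → ℝ)}
    (hφ : IsC2Diffeo φ) {i : κ} {k : ι} {h : ℝ → ℝ}
    (hh : ContDiff ℝ 1 h) (hh_inj : Function.Injective h) (heq : ∀ z, φ z i = h (z k)) :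
    IsC1Diffeo h := by
  classical
  obtain ⟨-, ψ, hψ, -, hφψ⟩ := hφ
  have hright : Function.RightInverse (fun t => ψ (Pi.single i t) k) h := fun t => by
    rw [← heq, hφψ, Pi.single_eq_same]
  refine ⟨hh, _, ?_, hright.leftInverse_of_injective hh_inj, hright⟩
  exact contDiff_pi.1 ((hψ.of_le one_le_two).comp (contDiff_single _ 1 i)) k

end IsC2Diffeo

-- Two coordinates of a surjection cannot both be injective functions of one source coordinate.
lemma injective_of_surjective_of_apply_eq {ι κ X Y : Type*} [Nontrivial Y]
    {Φ : (ι → X) → κ → Y} (hΦ : Function.Surjective Φ) {k : κ → ι} {h : κ → X → Y}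
    (hh : ∀ j, Function.Injective (h j)) (heq : ∀ z j, Φ z j = h j (z (k j))) :
    Function.Injective k := by
  classical
  intro j j' hk
  by_contra hne
  obtain ⟨a, b, hab⟩ := exists_pair_ne Y
  obtain ⟨z, hz⟩ := hΦ fun _ => a
  obtain ⟨w, hw⟩ := hΦ (Function.update (fun _ => a) j' b)
  have hj : Φ z j = Φ w j := by rw [hz, hw, Function.update_of_ne hne]
  have hzw : z (k j) = w (k j) := hh j (by rw [← heq, ← heq, hj])
  have hj' : Φ z j' = Φ w j' := by rw [heq, heq, ← hk, hzw]
  rw [hz, hw, Function.update_self] at hj'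
  exact hab hj'

theorem exists_perm_isC1Diffeo_of_sum_comp_eq {ι κ S : Type*} [Fintype ι] [Fintype κ]
    {c : κ → ι} (hc : Function.Injective c) {φ : (ι → ℝ) → (ι → ℝ)} (hφ : IsC2Diffeo φ)
    {α β : S → κ → ℝ → ℝ} (hα : ∀ s j, ContDiff ℝ 2 (α s j)) (hβ : ∀ s j, ContDiff ℝ 2 (β s j))
    (hid : ∀ s z, ∑ j, α s j (z (c j)) = ∑ j, β s j (φ z (c j)))
    (hspan : ∀ y, Submodule.span ℝ (Set.range fun s => curvatureSlope (β s) y) = ⊤) :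
    ∃ (π : Equiv.Perm κ) (h : κ → ℝ → ℝ),
      (∀ j, IsC1Diffeo (h j)) ∧ ∀ z j, φ z (c j) = h j (z (c (π j))) := by
  classical
  have hΦ : ∀ j, ContDiff ℝ 2 fun z => φ z (c j) := fun j => contDiff_pi.1 hφ.1 (c j)
  choose k h hk_ne hh hh_inj heq using fun j =>
    exists_eq_comp_eval_of_fderiv_mul_eq_zero ((hΦ j).of_le one_le_two)
      (fun z => hφ.fderiv_apply_ne_zero z (c j)) fun _ _ hil z =>
        fderiv_single_mul_fderiv_single_eq_zero hα hβ hΦ hid hspan hil z j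
  have hk_range : ∀ j, k j ∈ Set.range c := fun j => by
    by_contra hk
    exact hk_ne j 0 (fderiv_single_eq_zero_of_notMem_range
      (fun s j => (hα s j).differentiable two_ne_zero)
      (fun s j => (hβ s j).differentiable two_ne_zero)
      (fun j => (hΦ j).differentiable two_ne_zero) hid hspan hk 0 j)
  have hk_inj : Function.Injective k :=
    injective_of_surjective_of_apply_eq (hc.surjective_comp_right.comp hφ.isHomeomorph.surjective)
      hh_inj fun z j => heq j z
  choose π hπ using hk_range
  have hπ_inj : Function.Injective π := fun j j' hjj' =>
    hk_inj (by rw [← hπ j, ← hπ j', hjj'])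
  refine ⟨.ofBijective π (Finite.injective_iff_bijective.1 hπ_inj), h,
    fun j => hφ.isC1Diffeo_of_apply_eq (hh j) (hh_inj j) (heq j), fun z j => ?_⟩
  rw [Equiv.ofBijective_apply, hπ, heq]

section Block

variable {d : ℕ} {τ : Finset (Fin d)}

lemma coordOf_injective (τ : Finset (Fin d)) : Function.Injective (coordOf τ) :=
  Subtype.val_injective.comp τ.equivFin.symm.injective

lemma fillBlock_coordOf (y : {x // x ∈ τ} → ℝ) (j : Fin τ.card) :
    fillBlock τ y (coordOf τ j) = y (τ.equivFin.symm j) := by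
  simp [fillBlock, coordOf]

lemma jointDensity_eq_of_blockMech_eq {p : Fin d → (Fin d → ℝ) → ℝ}
    {u : Fin τ.card → ℝ → ℝ} (hfac : ∀ z, blockMech p τ z = ∏ j, u j (z (coordOf τ j))) :
    jointDensity p = fun z => (∏ j, u j (z (coordOf τ j))) * ∏ i ∈ τᶜ, p i z := by
  funext z
  rw [← hfac, blockMech, Finset.prod_mul_prod_compl, jointDensity]

end Block

theorem ica_block_variability_reparam_general {d : ℕ} {E S : Type*}
    [NormedAddCommGroup E] [NormedSpace ℝ E] [MeasurableSpace E] [BorelSpace E]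
    {p q : Fin d → (Fin d → ℝ) → ℝ}
    (hp : ∀ i, Continuous (p i)) (hq : ∀ i, Continuous (q i))
    (hp_pos : ∀ i z, 0 < p i z) (hq_pos : ∀ i z, 0 < q i z)
    {f f' : (Fin d → ℝ) → E} {g' : E → (Fin d → ℝ)}
    (hf : IsC2Diffeo f) (hf' : ContDiff ℝ 2 f') (hg' : ContDiff ℝ 2 g')
    (hinv₁ : Function.LeftInverse g' f') (hinv₂ : Function.RightInverse g' f')
    (hmatch₀ : Measure.map f (densityMeasure (jointDensity p)) =
      Measure.map f' (densityMeasure (jointDensity q)))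
    (τ : Finset (Fin d)) {u v : S → Fin τ.card → ℝ → ℝ}
    (hu : ∀ s j, IsC2Density (u s j)) (hv : ∀ s j, IsC2Density (v s j))
    (hmatch : ∀ s,
      Measure.map f (densityMeasure fun z =>
          (∏ j, u s j (z (coordOf τ j))) * ∏ i ∈ τᶜ, p i z) =
        Measure.map f' (densityMeasure fun z =>
          (∏ j, v s j (z (coordOf τ j))) * ∏ i ∈ τᶜ, q i z))
    {u₀ v₀ : Fin τ.card → ℝ → ℝ}
    (hu₀ : ∀ j, IsC2Density (u₀ j)) (hv₀ : ∀ j, IsC2Density (v₀ j))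
    (hfac : ∀ z, blockMech p τ z = ∏ j, u₀ j (z (coordOf τ j)))
    (hfac' : ∀ z, blockMech q τ z = ∏ j, v₀ j (z (coordOf τ j)))
    (hspan : ∀ y, Submodule.span ℝ (Set.range fun s => wVec τ (v s) y - wVec τ v₀ y) = ⊤) :
    ∃ (π : Equiv.Perm (Fin τ.card)) (hs : Fin τ.card → ℝ → ℝ),
      (∀ j, IsC1Diffeo (hs j)) ∧
      ∀ (y : {x // x ∈ τ} → ℝ) (j : Fin τ.card),
        blockMap (fun z => g' (f z)) τ y (τ.equivFin.symm j) =
          hs j (y (τ.equivFin.symm (π j))) := by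
  have hφ : IsC2Diffeo (g' ∘ f) := .comp ⟨hg', f', hf', hinv₂, hinv₁⟩ hf
  have hpull := fun {μ ν} => map_comp_eq_of_map_eq_map (μ := μ) (ν := ν)
    hf.1.continuous.measurable hf'.continuous.measurable hg'.continuous.measurable hinv₁
  rw [jointDensity_eq_of_blockMech_eq hfac, jointDensity_eq_of_blockMech_eq hfac'] at hmatch₀
  have hid := fun s => sum_log_sub_log_eq_of_map_eq (coordOf τ) hφ.isHomeomorph
    (continuous_finsetProd τᶜ fun i _ => hp i) (continuous_finsetProd τᶜ fun i _ => hq i)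
    (fun z => Finset.prod_pos fun i _ => hp_pos i z)
    (fun z => Finset.prod_pos fun i _ => hq_pos i z)
    (fun j => (hu₀ j).2.1.continuous) (fun j => (hu s j).2.1.continuous)
    (fun j => (hv₀ j).2.1.continuous) (fun j => (hv s j).2.1.continuous)
    (fun j => (hu₀ j).1) (fun j => (hu s j).1) (fun j => (hv₀ j).1) (fun j => (hv s j).1)
    (hpull hmatch₀) (hpull (hmatch s))
  obtain ⟨π, h, hh, heq⟩ := exists_perm_isC1Diffeo_of_sum_comp_eq (coordOf_injective τ) hφ
    (fun s j => (hu s j).contDiff_log.sub (hu₀ j).contDiff_log)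
    (fun s j => (hv s j).contDiff_log.sub (hv₀ j).contDiff_log) hid fun y => by
      have hy := hspan fun x => y (τ.equivFin x)
      simpa [← curvatureSlope_log_sub_log τ (hv _) hv₀] using hy
  exact ⟨π, h, hh, fun y j => (heq (fillBlock τ y) j).trans (by rw [fillBlock_coordOf])⟩

/-- **Proposition (block-variability: identifiability up to permutation and scaling within a
block).** Under the hypotheses of the fat-hand block-identifiability theorem, with all
densities and diffeomorphisms additionally C², suppose that for some target set `τ0 ∈ T`
with `n := |τ0|` there are `2n` further perfect interventional regimes with target `τ0`
whose intervened block densities factorize into strictly positive C² marginals (in both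
models, with matching pushforwards), the unintervened block mechanism also factorizes into
marginals `u0` (resp. `u0'`), and for every block configuration the vectors
`w(z_τ, s) − w(z_τ, 0)`, `s = 1, …, 2n`, are linearly independent. Then the induced block
map `φ_τ0` of `φ := f′⁻¹ ∘ f` belongs to `S_reparam` on `ℝ^n`: there are a permutation `π`
of the block coordinates and C¹ diffeomorphisms `hs j` of `ℝ` with
`φ_τ0(y) j = hs j (y (π j))`. -/
theorem ica_block_variability_reparam {d : ℕ}
    (pa : Fin d → Finset (Fin d))
    (hpa : ∀ i : Fin d, ∀ j ∈ pa i, j < i)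
    (p q : Fin d → (Fin d → ℝ) → ℝ)
    (hp : IsCondFamily2 pa p) (hq : IsCondFamily2 pa q)
    (T : Finset (Finset (Fin d)))
    (hcover : ∀ i : Fin d, ∃ τ ∈ T, i ∈ τ)
    (hstrict : ∀ τ ∈ T, τ ≠ Finset.univ)
    (f f' g' : (Fin d → ℝ) → (Fin d → ℝ))
    (hf : IsC2Diffeo f) (hf' : ContDiff ℝ 2 f') (hg' : ContDiff ℝ 2 g')
    (hinv₁ : Function.LeftInverse g' f') (hinv₂ : Function.RightInverse g' f')
    (r r' : (τ : Finset (Fin d)) → Fin τ.card → (Fin d → ℝ) → ℝ)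
    (r0 r0' : (τ : Finset (Fin d)) → (Fin d → ℝ) → ℝ)
    (hr : ∀ τ ∈ T, ∀ s : Fin τ.card, IsBlockDensity2 τ (r τ s))
    (hr' : ∀ τ ∈ T, ∀ s : Fin τ.card, IsBlockDensity2 τ (r' τ s))
    (hbase : ∀ τ ∈ T, (∀ i ∈ τ, pa i ⊆ τ) →
        r0 τ = blockMech p τ ∧ r0' τ = blockMech q τ)
    (hbase' : ∀ τ ∈ T, ¬(∀ i ∈ τ, pa i ⊆ τ) →
        IsBlockDensity2 τ (r0 τ) ∧ IsBlockDensity2 τ (r0' τ) ∧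
        Measure.map f (densityMeasure fun z => r0 τ z * ∏ i ∈ τᶜ, p i z) =
          Measure.map f' (densityMeasure fun z => r0' τ z * ∏ i ∈ τᶜ, q i z))
    (hdiscp : ∀ τ ∈ T, ∀ᵐ (z : Fin d → ℝ) ∂volume,
        LinearIndependent ℝ (fun s : Fin τ.card => fun j : Fin τ.card =>
          fderiv ℝ (fun w => Real.log (r τ s w) - Real.log (r0 τ w)) z
            (Pi.single (coordOf τ j) 1)))
    (hdiscq : ∀ τ ∈ T, ∀ᵐ (z : Fin d → ℝ) ∂volume,
        LinearIndependent ℝ (fun s : Fin τ.card => fun j : Fin τ.card =>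
          fderiv ℝ (fun w => Real.log (r' τ s w) - Real.log (r0' τ w)) z
            (Pi.single (coordOf τ j) 1)))
    (hmatch0 : Measure.map f (densityMeasure (jointDensity p)) =
        Measure.map f' (densityMeasure (jointDensity q)))
    (hmatch : ∀ τ ∈ T, ∀ s : Fin τ.card,
        Measure.map f (densityMeasure fun z => r τ s z * ∏ i ∈ τᶜ, p i z) =
        Measure.map f' (densityMeasure fun z => r' τ s z * ∏ i ∈ τᶜ, q i z))
    -- the distinguished block `τ0` with `2 n` further factorized interventional regimes
    (τ0 : Finset (Fin d)) (hτ0 : τ0 ∈ T)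
    (uu uu' : Fin (2 * τ0.card) → Fin τ0.card → ℝ → ℝ)
    (huu : ∀ s j, IsC2Density (uu s j)) (huu' : ∀ s j, IsC2Density (uu' s j))
    (hmatch2 : ∀ s : Fin (2 * τ0.card),
        Measure.map f (densityMeasure fun z =>
            (∏ j : Fin τ0.card, uu s j (z (coordOf τ0 j))) * ∏ i ∈ τ0ᶜ, p i z) =
        Measure.map f' (densityMeasure fun z =>
            (∏ j : Fin τ0.card, uu' s j (z (coordOf τ0 j))) * ∏ i ∈ τ0ᶜ, q i z))
    (u0 u0' : Fin τ0.card → ℝ → ℝ)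
    (hu0 : ∀ j, IsC2Density (u0 j)) (hu0' : ∀ j, IsC2Density (u0' j))
    (hfac : ∀ z : Fin d → ℝ,
        blockMech p τ0 z = ∏ j : Fin τ0.card, u0 j (z (coordOf τ0 j)))
    (hfac' : ∀ z : Fin d → ℝ,
        blockMech q τ0 z = ∏ j : Fin τ0.card, u0' j (z (coordOf τ0 j)))
    (hvar : ∀ y : {x // x ∈ τ0} → ℝ,
        LinearIndependent ℝ (fun s : Fin (2 * τ0.card) =>
          wVec τ0 (uu s) y - wVec τ0 u0 y))
    (hvar' : ∀ y : {x // x ∈ τ0} → ℝ,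
        LinearIndependent ℝ (fun s : Fin (2 * τ0.card) =>
          wVec τ0 (uu' s) y - wVec τ0 u0' y)) :
    ∃ (π : Equiv.Perm (Fin τ0.card)) (hs : Fin τ0.card → ℝ → ℝ),
      (∀ j, IsC1Diffeo (hs j)) ∧
      ∀ (y : {x // x ∈ τ0} → ℝ) (j : Fin τ0.card),
        blockMap (fun z => g' (f z)) τ0 y (τ0.equivFin.symm j) =
          hs j (y (τ0.equivFin.symm (π j))) := by
  exact ica_block_variability_reparam_general (fun i => (hp i).2.1.continuous)
    (fun i => (hq i).2.1.continuous) (fun i => (hp i).1) (fun i => (hq i).1) hf hf' hg' hinv₁ hinv₂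
    hmatch0 τ0 huu huu' hmatch2 hu0 hu0' hfac hfac' fun y =>
      (hvar' y).span_eq_top_of_card_eq_finrank' (by simp [two_mul])
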